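/- The partition-counting sequence is not P-recursive: there do not exist d ≥ 0 and polynomials c₀, c₁, …, c_d with rational coefficients, with c_d ≠ 0, such that c_d(n)·p(n+d) + c_{d-1}(n)·p(n+d−1) + ⋯ + c₀(n)·p(n) = 0 for all sufficiently large n, where p(n) denotes the number of partitions of n. -/

import Mathlib

/-!
The generating function `P(x) = ∑ p(n) xⁿ` has the whole unit circle as natural boundary, whereas
the generating function of a P-recursive sequence has finitely many singularities.

Suppose `p(n)` satisfies a polynomial recurrence. With `θ = x d/dx`, the recurrence gives
`∑_{k ≤ K} b_k(x) θᵏ P(x) = Q(x)` on the unit disc, with polynomials `b_k` and `Q` and with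
`b_K ≠ 0` (`exists_ode`). Since `b_K` has finitely many zeros, some root of unity `ζ` satisfies
`b_K(ζ) ≠ 0`. Near `ζ` the equation can be solved for `θᴷ P`, so Grönwall's inequality along
`t ↦ ζ eᵗ`, where `θ` is `d/dt`, shows that `P(rζ)` stays bounded as `r → 1⁻` (`bounded_of_ode`).

On the other hand `1 / P(x) = ∏ (1 - xⁿ)` by Euler (`tendsto_inv_prod`), and this product tends to
`0` at `x = rζ` (`norm_prod_le`). If `ζ` has order `m`, the factors are grouped in blocks of `m`.
The first block contains the factor `1 - r^m`, and the `k`-th block is at most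
`1 + C r^{mk} (1 - r^m)` because `∏_{j ≤ m} (1 - s ζʲ) = 1 - s^m`. The product of the latter
bounds is at most `exp C`, as `∑_{k ≥ 1} r^{mk} (1 - r^m) ≤ 1`. Hence `P(rζ)` is unbounded, a
contradiction.
-/

/-- A sequence `a : ℕ → ℚ` is P-recursive (holonomic) if there exist `d ≥ 0`
and polynomials `c₀, …, c_d ∈ ℚ[x]` with `c_d ≠ 0` such that
`∑_{j=0}^{d} c_j(n) · a(n+j) = 0` for all sufficiently large `n`. -/
def PRecursive (a : ℕ → ℚ) : Prop :=
  ∃ (d : ℕ) (c : ℕ → Polynomial ℚ), c d ≠ 0 ∧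
    ∀ᶠ n : ℕ in Filter.atTop,
      ∑ j ∈ Finset.range (d + 1), (c j).eval (n : ℚ) * a (n + j) = 0

namespace PartitionHolonomic
open Finset Filter Topology

/-- The number of partitions of `n`. -/
noncomputable def p (n : ℕ) : ℕ := Fintype.card (Nat.Partition n)

/-! ### Euler's product on the unit disc -/

/-- The formal power series `∑_j X^{(i+1)j}`, i.e. `1 / (1 - X^{i+1})`, with natural coefficients.
The index is shifted so that `i` ranges over all of `ℕ`. -/
noncomputable def geo (i : ℕ) : PowerSeries ℕ :=
  PowerSeries.mk fun n => if (i + 1) ∣ n then 1 else 0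

/-- `∏_{i < N} 1 / (1 - X^{i+1})`, the generating function of the partitions with all parts at
most `N`. -/
noncomputable def boundedParts (N : ℕ) : PowerSeries ℕ := ∏ i ∈ range N, geo i

lemma boundedParts_succ (N : ℕ) : boundedParts (N + 1) = boundedParts N * geo N :=
  prod_range_succ _ _

open scoped PowerSeries.WithPiTopology in
lemma tsum_X_pow_eq_geo (i : ℕ) :
    ∑' j : ℕ, (PowerSeries.X : PowerSeries ℕ) ^ ((i + 1) * j) = geo i := by
  have h : HasSum (fun j : ℕ => (PowerSeries.X : PowerSeries ℕ) ^ ((i + 1) * j)) (geo i) := by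
    rw [HasSum, PowerSeries.WithPiTopology.tendsto_iff_coeff_tendsto]
    intro n
    apply tendsto_nhds_of_eventually_eq
    filter_upwards [eventually_ge_atTop (range (n + 1))] with s hs
    simp only [map_sum, PowerSeries.coeff_X_pow, geo, PowerSeries.coeff_mk]
    split_ifs with hd
    · obtain ⟨j, rfl⟩ := hd
      have hj : j ∈ s := hs (by simp only [mem_range]; nlinarith)
      rw [sum_eq_single_of_mem j hj]
      · simp
      · intro b _ hb
        simp [Ne.symm hb]
    · refine sum_eq_zero fun j _ => if_neg ?_
      rintro rfl
      exact hd (dvd_mul_right _ _)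
  exact h.tsum_eq

lemma coeff_boundedParts_mono (n : ℕ) : Monotone fun N => (boundedParts N).coeff n := by
  refine monotone_nat_of_le_succ fun N => ?_
  rw [boundedParts_succ, PowerSeries.coeff_mul]
  refine le_trans (le_of_eq ?_)
    (single_le_sum (f := fun p : ℕ × ℕ => (boundedParts N).coeff p.1 * (geo N).coeff p.2)
      (fun _ _ => Nat.zero_le _) (show (n, 0) ∈ antidiagonal n by simp))
  simp [geo]

lemma coeff_boundedParts_succ {n N : ℕ} (h : n ≤ N) :
    (boundedParts (N + 1)).coeff n = (boundedParts N).coeff n := by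
  rw [boundedParts_succ, PowerSeries.coeff_mul,
    sum_eq_single_of_mem (n, 0) (by simp)]
  · simp [geo]
  · rintro ⟨a, b⟩ hab hne
    rw [HasAntidiagonal.mem_antidiagonal] at hab
    have hb : b ≠ 0 := by
      rintro rfl
      exact hne (by simpa using hab)
    have : ¬ (N + 1) ∣ b := fun hd => by
      have := Nat.le_of_dvd (Nat.pos_of_ne_zero hb) hd
      simp only at hab
      omega
    simp [geo, this]

open scoped PowerSeries.WithPiTopology in
/-- A partition of `n ≤ N` has all parts at most `N`. This is read off from Mathlib's infinite
product for the partition generating function, whose partial products have stationary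
coefficients. -/
lemma coeff_boundedParts_eq {n N : ℕ} (h : n ≤ N) :
    (boundedParts N).coeff n = Fintype.card (Nat.Partition n) := by
  have key : ∀ M, n ≤ M → (boundedParts M).coeff n = (boundedParts n).coeff n := by
    intro M hM
    induction M, hM using Nat.le_induction with
    | base => rfl
    | succ M hM ih => rw [coeff_boundedParts_succ hM, ih]
  have hp := (Nat.Partition.hasProd_powerSeriesMk_card_restricted ℕ
    (fun _ => True)).tendsto_prod_nat
  rw [PowerSeries.WithPiTopology.tendsto_iff_coeff_tendsto] at hp
  have h1 := hp n
  simp only [if_true, tsum_X_pow_eq_geo, PowerSeries.coeff_mk] at h1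
  have h2 : Tendsto (fun M => (boundedParts M).coeff n) atTop (𝓝 ((boundedParts n).coeff n)) :=
    tendsto_atTop_of_eventually_const key
  rw [key N h, tendsto_nhds_unique h2 h1]
  simp [Nat.Partition.restricted]

lemma coeff_boundedParts_le (n N : ℕ) :
    (boundedParts N).coeff n ≤ Fintype.card (Nat.Partition n) := by
  rw [← coeff_boundedParts_eq (le_max_left n N)]
  exact coeff_boundedParts_mono n (le_max_right n N)

lemma hasSum_geo {x : ℂ} (hx : ‖x‖ < 1) (i : ℕ) :
    (Summable fun n => ‖((geo i).coeff n : ℂ) * x ^ n‖) ∧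
      ∑' n, ((geo i).coeff n : ℂ) * x ^ n = (1 - x ^ (i + 1))⁻¹ := by
  have hx' : ‖x ^ (i + 1)‖ < 1 := by
    rw [norm_pow]; exact pow_lt_one₀ (norm_nonneg _) hx (by omega)
  constructor
  · refine Summable.of_nonneg_of_le (fun _ => norm_nonneg _) (fun n => ?_)
      (summable_geometric_of_lt_one (norm_nonneg x) hx)
    simp only [geo, PowerSeries.coeff_mk]
    split_ifs <;> simp
  · rw [← tsum_geometric_of_norm_lt_one hx']
    have hinj : Function.Injective fun j : ℕ => (i + 1) * j :=
      fun a b hab => Nat.eq_of_mul_eq_mul_left (Nat.succ_pos i) hab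
    rw [← hinj.tsum_eq]
    · refine tsum_congr fun j => ?_
      simp [geo, pow_mul]
    · intro n hn
      by_contra hc
      refine hn ?_
      have : ¬ (i + 1) ∣ n := fun ⟨j, hj⟩ => hc ⟨j, hj.symm⟩
      simp [geo, this]

lemma hasSum_boundedParts {x : ℂ} (hx : ‖x‖ < 1) (N : ℕ) :
    (Summable fun n => ‖((boundedParts N).coeff n : ℂ) * x ^ n‖) ∧
      ∑' n, ((boundedParts N).coeff n : ℂ) * x ^ n = (∏ i ∈ range N, (1 - x ^ (i + 1)))⁻¹ := by
  induction N with
  | zero =>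
    have h : ∀ n ≠ 0, ((boundedParts 0).coeff n : ℂ) * x ^ n = 0 := by
      intro n hn
      simp [boundedParts, PowerSeries.coeff_one, hn]
    constructor
    · exact summable_of_ne_finset_zero (s := {0}) fun n hn => by
        rw [h n (by simpa using hn), norm_zero]
    · rw [tsum_eq_single 0 h]
      simp [boundedParts]
  | succ N ih =>
    have hg := hasSum_geo hx N
    have hc : ∀ n, ((boundedParts (N + 1)).coeff n : ℂ) * x ^ n =
        ∑ kl ∈ antidiagonal n, (((boundedParts N).coeff kl.1 : ℂ) * x ^ kl.1) *
          (((geo N).coeff kl.2 : ℂ) * x ^ kl.2) := by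
      intro n
      rw [boundedParts_succ, PowerSeries.coeff_mul]
      push_cast
      rw [sum_mul]
      refine sum_congr rfl fun kl hkl => ?_
      have hx' : x ^ n = x ^ kl.1 * x ^ kl.2 := by
        rw [← pow_add, HasAntidiagonal.mem_antidiagonal.1 hkl]
      rw [hx']
      ring
    simp only [hc]
    have hsum := summable_norm_sum_mul_antidiagonal_of_summable_norm ih.1 hg.1
    refine ⟨hsum, ?_⟩
    rw [← tsum_mul_tsum_eq_tsum_sum_antidiagonal_of_summable_norm ih.1 hg.1, ih.2, hg.2,
      prod_range_succ, mul_inv]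

/-- From `1 / (1 - r^{i+1}) ≤ exp (r^i / (1 - r))`, a bound uniform in `N`. -/
lemma prod_inv_le {r : ℝ} (h0 : 0 ≤ r) (h1 : r < 1) (N : ℕ) :
    (∏ i ∈ range N, (1 - r ^ (i + 1)))⁻¹ ≤ Real.exp ((1 - r)⁻¹ * (1 - r)⁻¹) := by
  have h : ∀ i, (1 - r ^ (i + 1))⁻¹ ≤ Real.exp (r ^ i * (1 - r)⁻¹) := by
    intro i
    have hr : r ^ (i + 1) ≤ r := pow_le_of_le_one h0 h1.le (by omega)
    have hpos : 0 < 1 - r ^ (i + 1) := by linarith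
    refine le_trans ?_ (Real.add_one_le_exp _)
    rw [inv_le_iff_one_le_mul₀ hpos]
    have hA : r ^ (i + 1) ≤ r ^ i := pow_le_pow_of_le_one h0 h1.le (by omega)
    have hB : 1 ≤ (1 - r)⁻¹ * (1 - r ^ (i + 1)) := by
      rw [inv_mul_eq_div, le_div_iff₀ (by linarith)]; linarith
    have hC : r ^ i * 1 ≤ r ^ i * ((1 - r)⁻¹ * (1 - r ^ (i + 1))) :=
      mul_le_mul_of_nonneg_left hB (by positivity)
    nlinarith
  rw [← prod_inv_distrib]
  calc ∏ i ∈ range N, (1 - r ^ (i + 1))⁻¹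
      ≤ ∏ i ∈ range N, Real.exp (r ^ i * (1 - r)⁻¹) := by
        refine prod_le_prod (fun i _ => ?_) fun i _ => h i
        have := pow_le_one₀ (n := i + 1) h0 h1.le
        exact inv_nonneg.2 (by linarith)
    _ = Real.exp ((∑ i ∈ range N, r ^ i) * (1 - r)⁻¹) := by
        rw [← Real.exp_sum, sum_mul]
    _ ≤ _ := by
        have hi : 0 ≤ (1 - r)⁻¹ := inv_nonneg.2 (by linarith)
        refine Real.exp_le_exp.2 (mul_le_mul_of_nonneg_right ?_ hi)
        rw [← tsum_geometric_of_lt_one h0 h1]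
        exact (summable_geometric_of_lt_one h0 h1).sum_le_tsum _ fun _ _ => by positivity

/-- The partition generating function converges on the unit disc: up to degree `N` its partial sums
are bounded by the products `∏_{i < N} 1 / (1 - r^{i+1})`. -/
lemma summable_p {r : ℝ} (h0 : 0 ≤ r) (h1 : r < 1) : Summable fun n => (p n : ℝ) * r ^ n := by
  refine summable_of_sum_range_le (c := Real.exp ((1 - r)⁻¹ * (1 - r)⁻¹))
    (fun n => by positivity) fun N => ?_
  have hx : ‖(r : ℂ)‖ < 1 := by simpa [abs_of_nonneg h0] using h1
  obtain ⟨hs, ht⟩ := hasSum_boundedParts hx N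
  have hs' : Summable fun n => ((boundedParts N).coeff n : ℝ) * r ^ n := by
    refine hs.congr fun n => ?_
    simp [abs_of_nonneg h0]
  have ht' : ∑' n, ((boundedParts N).coeff n : ℝ) * r ^ n
      = (∏ i ∈ range N, (1 - r ^ (i + 1)))⁻¹ := by
    have : ((∑' n, ((boundedParts N).coeff n : ℝ) * r ^ n : ℝ) : ℂ)
      = ((∏ i ∈ range N, (1 - r ^ (i + 1)))⁻¹ : ℝ) := by
      push_cast
      exact ht
    exact_mod_cast this
  refine le_trans ?_ (prod_inv_le h0 h1 N)
  rw [← ht']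
  refine le_trans (le_of_eq (sum_congr rfl fun n hn => ?_))
    (hs'.sum_le_tsum (range N) fun _ _ => by positivity)
  rw [coeff_boundedParts_eq (mem_range.1 hn).le, p]

/-- Euler's product formula `∑ p(n) xⁿ = ∏ 1 / (1 - x^{i+1})` on the unit disc, by dominated
convergence of the coefficients. -/
lemma tendsto_inv_prod {x : ℂ} (hx : ‖x‖ < 1) :
    Tendsto (fun N => (∏ i ∈ range N, (1 - x ^ (i + 1)))⁻¹) atTop
      (𝓝 (∑' n, (p n : ℂ) * x ^ n)) := by
  simp only [← (hasSum_boundedParts hx _).2]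
  refine tendsto_tsum_of_dominated_convergence (summable_p (norm_nonneg x) hx) (fun n => ?_)
    (Eventually.of_forall fun N n => ?_)
  · refine tendsto_atTop_of_eventually_const (i₀ := n) fun N hN => ?_
    rw [coeff_boundedParts_eq hN, p]
  · rw [norm_mul, norm_pow, Complex.norm_natCast]
    gcongr
    exact coeff_boundedParts_le n N

/-! ### Blow-up at roots of unity -/

lemma norm_prod_sub_prod_le (a b : ℕ → ℂ) (ha : ∀ j, ‖a j‖ ≤ 2) (hb : ∀ j, ‖b j‖ ≤ 2) (n : ℕ) :
    ‖∏ j ∈ range n, a j - ∏ j ∈ range n, b j‖ ≤ 2 ^ n * ∑ j ∈ range n, ‖a j - b j‖ := by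
  induction n with
  | zero => simp
  | succ n ih =>
    rw [prod_range_succ, prod_range_succ, sum_range_succ]
    have hB : ‖∏ j ∈ range n, b j‖ ≤ 2 ^ n := by
      rw [norm_prod]
      exact (prod_le_prod (fun _ _ => norm_nonneg _) fun j _ => hb j).trans (by simp)
    set A := ∏ j ∈ range n, a j
    set B := ∏ j ∈ range n, b j
    have h1 : A * a n - B * b n = (A - B) * a n + B * (a n - b n) := by ring
    have h2 : ‖(A - B) * a n‖ ≤ (2 ^ n * ∑ j ∈ range n, ‖a j - b j‖) * 2 := by
      rw [norm_mul]
      exact mul_le_mul ih (ha n) (norm_nonneg _) (by positivity)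
    have h3 : ‖B * (a n - b n)‖ ≤ 2 ^ n * ‖a n - b n‖ := by
      rw [norm_mul]
      exact mul_le_mul_of_nonneg_right hB (norm_nonneg _)
    have h4 : (0:ℝ) ≤ 2 ^ n * ‖a n - b n‖ := by positivity
    rw [h1]
    refine (norm_add_le _ _).trans ?_
    rw [pow_succ]
    nlinarith

lemma prod_one_sub_mul_zeta {ζ : ℂ} {m : ℕ} (hm : 0 < m) (hζ : IsPrimitiveRoot ζ m) (s : ℂ) :
    ∏ j ∈ range m, (1 - s * ζ ^ (j + 1)) = 1 - s ^ m := by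
  have h := hζ.pow_sub_pow_eq_prod_sub_mul 1 s hm
  rw [one_pow] at h
  rw [h]
  have hz : ζ ^ m = 1 := hζ.pow_eq_one
  refine prod_bij (fun j _ => ζ ^ (j + 1)) (fun j _ => ?_) (fun i hi j hj hij => ?_)
    (fun ξ hξ => ?_) (fun j _ => by rw [mul_comm])
  · rw [Polynomial.mem_nthRootsFinset hm, ← pow_mul, mul_comm, pow_mul, hz, one_pow]
  · have hζ0 : ζ ≠ 0 := hζ.ne_zero hm.ne'
    rw [pow_succ, pow_succ] at hij
    exact hζ.pow_inj (mem_range.1 hi) (mem_range.1 hj) (mul_right_cancel₀ hζ0 hij)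
  · rw [Polynomial.mem_nthRootsFinset hm] at hξ
    have : NeZero m := ⟨hm.ne'⟩
    obtain ⟨i, hi, rfl⟩ := hζ.eq_pow_of_pow_eq_one hξ
    rcases Nat.eq_zero_or_pos i with rfl | hi0
    · exact ⟨m - 1, mem_range.2 (by omega), by rw [Nat.sub_add_cancel hm, hz, pow_zero]⟩
    · exact ⟨i - 1, mem_range.2 (by omega), by rw [Nat.sub_add_cancel hi0]⟩

/-- The factors of Euler's product at `rζ` indexed by `mk + 1, …, mk + m`. With all radii replaced
by `r^{mk}` the block would be `1 - r^{mk·m}`, of norm at most `1`; the replacement changes it by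
at most `m 2^m r^{mk} (1 - r^m)`. -/
lemma norm_block_le {ζ : ℂ} {m : ℕ} (hm : 0 < m) (hζ : IsPrimitiveRoot ζ m) {r : ℝ}
    (h0 : 0 < r) (h1 : r < 1) (k : ℕ) :
    ‖∏ j ∈ range m, (1 - (r * ζ) ^ (m * k + j + 1))‖
      ≤ 1 + m * 2 ^ m * ((r ^ m) ^ k * (1 - r ^ m)) := by
  have hn : ‖ζ‖ = 1 := hζ.norm'_eq_one hm.ne'
  have hpw : ∀ l, ((r : ℂ) * ζ) ^ (m * k + l) = (r : ℂ) ^ (m * k + l) * ζ ^ l := by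
    intro l
    rw [mul_pow, pow_add ζ, pow_mul ζ, hζ.pow_eq_one, one_pow, one_mul]
  have hr1 : ∀ l, r ^ l ≤ 1 := fun l => pow_le_one₀ h0.le h1.le
  have hr0 : ∀ l, 0 < r ^ l := fun l => pow_pos h0 l
  have hnorm : ∀ (l i : ℕ), ‖(1 : ℂ) - (r : ℂ) ^ l * ζ ^ i‖ ≤ 2 := by
    intro l i
    refine (norm_sub_le _ _).trans ?_
    rw [norm_mul, norm_pow, norm_pow, hn, one_pow, mul_one, norm_one, Complex.norm_real,
      Real.norm_of_nonneg h0.le]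
    linarith [hr1 l]
  have hd := norm_prod_sub_prod_le (fun j => 1 - (r : ℂ) ^ (m * k + j + 1) * ζ ^ (j + 1))
    (fun j => 1 - (r : ℂ) ^ (m * k) * ζ ^ (j + 1)) (fun j => hnorm _ _) (fun j => hnorm _ _) m
  rw [prod_one_sub_mul_zeta hm hζ] at hd
  have hb : ‖(1 : ℂ) - ((r : ℂ) ^ (m * k)) ^ m‖ ≤ 1 := by
    rw [← pow_mul]
    have : (1 : ℂ) - (r : ℂ) ^ (m * k * m) = ((1 - r ^ (m * k * m) : ℝ) : ℂ) := by push_cast; rfl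
    rw [this, Complex.norm_real, Real.norm_of_nonneg (by linarith [hr1 (m * k * m)])]
    linarith [hr0 (m * k * m)]
  have hs : ∑ j ∈ range m, ‖(1 - (r : ℂ) ^ (m * k + j + 1) * ζ ^ (j + 1)) -
      (1 - (r : ℂ) ^ (m * k) * ζ ^ (j + 1))‖ ≤ m * ((r ^ m) ^ k * (1 - r ^ m)) := by
    have : ∀ j ∈ range m, ‖(1 - (r : ℂ) ^ (m * k + j + 1) * ζ ^ (j + 1)) -
      (1 - (r : ℂ) ^ (m * k) * ζ ^ (j + 1))‖ ≤ (r ^ m) ^ k * (1 - r ^ m) := by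
      intro j hj
      have he : (1 - (r : ℂ) ^ (m * k + j + 1) * ζ ^ (j + 1)) -
        (1 - (r : ℂ) ^ (m * k) * ζ ^ (j + 1)) =
          ((r ^ (m * k) * (1 - r ^ (j + 1)) : ℝ) : ℂ) * ζ ^ (j + 1) := by
        push_cast; ring
      rw [he, norm_mul, norm_pow, hn, one_pow, mul_one, Complex.norm_real,
        Real.norm_of_nonneg (mul_nonneg (hr0 _).le (by linarith [hr1 (j + 1)])), pow_mul]
      have : r ^ m ≤ r ^ (j + 1) := pow_le_pow_of_le_one h0.le h1.le (by
        have := mem_range.1 hj; omega)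
      gcongr
    simpa using sum_le_card_nsmul _ _ _ this
  have hE : ∏ j ∈ range m, (1 - ((r : ℂ) * ζ) ^ (m * k + j + 1))
      = ∏ j ∈ range m, (1 - (r : ℂ) ^ (m * k + j + 1) * ζ ^ (j + 1)) :=
    prod_congr rfl fun j _ => by rw [add_assoc, hpw]
  rw [hE]
  have h2 : (2:ℝ) ^ m * ∑ j ∈ range m, ‖(1 - (r : ℂ) ^ (m * k + j + 1) * ζ ^ (j + 1)) -
      (1 - (r : ℂ) ^ (m * k) * ζ ^ (j + 1))‖ ≤ 2 ^ m * (m * ((r ^ m) ^ k * (1 - r ^ m))) := by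
    gcongr
  have h3 := norm_le_norm_add_norm_sub' (∏ j ∈ range m,
    (1 - (r : ℂ) ^ (m * k + j + 1) * ζ ^ (j + 1))) (1 - ((r : ℂ) ^ (m * k)) ^ m)
  linarith

/-- The first block contains the factor `1 - (rζ)^m = 1 - r^m`; the others have norm at most `2`. -/
lemma norm_first_block_le {ζ : ℂ} {m : ℕ} (hm : 0 < m) (hζ : IsPrimitiveRoot ζ m) {r : ℝ}
    (h0 : 0 < r) (h1 : r < 1) :
    ‖∏ j ∈ range m, (1 - (r * ζ) ^ (j + 1))‖ ≤ 2 ^ m * (1 - r ^ m) := by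
  have hn : ‖ζ‖ = 1 := hζ.norm'_eq_one hm.ne'
  obtain ⟨l, rfl⟩ := Nat.exists_eq_succ_of_ne_zero hm.ne'
  have hq : r ^ (l + 1) ≤ 1 := pow_le_one₀ h0.le h1.le
  rw [prod_range_succ, norm_mul]
  have hlast : ‖1 - ((r : ℂ) * ζ) ^ (l + 1)‖ = 1 - r ^ (l + 1) := by
    rw [mul_pow, hζ.pow_eq_one, mul_one]
    have : (1 : ℂ) - (r : ℂ) ^ (l + 1) = ((1 - r ^ (l + 1) : ℝ) : ℂ) := by push_cast; rfl
    rw [this, Complex.norm_real, Real.norm_of_nonneg (by linarith)]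
  have hrest : ‖∏ j ∈ range l, (1 - ((r : ℂ) * ζ) ^ (j + 1))‖ ≤ 2 ^ l := by
    rw [norm_prod]
    refine (prod_le_prod (g := fun _ => (2:ℝ)) (fun _ _ => norm_nonneg _)
      fun j _ => ?_).trans (by simp)
    refine (norm_sub_le _ _).trans ?_
    rw [norm_pow, norm_mul, hn, mul_one, norm_one, Complex.norm_real, Real.norm_of_nonneg h0.le]
    linarith [pow_le_one₀ (n := j + 1) h0.le h1.le]
  show _ * ‖1 - ((r : ℂ) * ζ) ^ (l + 1)‖ ≤ 2 ^ (l + 1) * (1 - r ^ (l + 1))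
  rw [hlast]
  refine mul_le_mul_of_nonneg_right (hrest.trans ?_) (by linarith)
  exact pow_le_pow_right₀ (by norm_num) (by omega)

/-- `∏ (1 - xⁿ)` tends to `0` radially at `ζ`: the error terms `r^{mk} (1 - r^m)` of the blocks
after the first telescope to at most `1`, so those blocks contribute a bounded factor, uniformly
in `r` and `M`. -/
lemma norm_prod_le {ζ : ℂ} {m : ℕ} (hm : 0 < m) (hζ : IsPrimitiveRoot ζ m) {r : ℝ}
    (h0 : 0 < r) (h1 : r < 1) (M : ℕ) :
    ‖∏ n ∈ range (m * (M + 1)), (1 - (r * ζ) ^ (n + 1))‖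
      ≤ 2 ^ m * (1 - r ^ m) * Real.exp (m * 2 ^ m) := by
  have hq1 : r ^ m ≤ 1 := pow_le_one₀ h0.le h1.le
  have hq0 : 0 < r ^ m := pow_pos h0 m
  have key : ‖∏ n ∈ range (m * (M + 1)), (1 - ((r : ℂ) * ζ) ^ (n + 1))‖
      ≤ 2 ^ m * (1 - r ^ m) * Real.exp (m * 2 ^ m * (r ^ m - (r ^ m) ^ (M + 1))) := by
    induction M with
    | zero => simpa using norm_first_block_le hm hζ h0 h1
    | succ M ih =>
      rw [mul_add m (M + 1) 1, mul_one, prod_range_add, norm_mul]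
      have hB := (norm_block_le hm hζ h0 h1 (M + 1)).trans
        ((add_comm _ _).trans_le (Real.add_one_le_exp _))
      refine (mul_le_mul ih hB (norm_nonneg _) ?_).trans (le_of_eq ?_)
      · have : 0 ≤ 1 - r ^ m := by linarith
        positivity
      · rw [mul_assoc, ← Real.exp_add]
        congr 2
        ring
  refine key.trans ?_
  have h3 : r ^ m - (r ^ m) ^ (M + 1) ≤ 1 := by
    have := pow_pos hq0 (M + 1)
    linarith
  have h4 : 0 ≤ 1 - r ^ m := by linarith
  refine mul_le_mul_of_nonneg_left (Real.exp_le_exp.2 ?_) (by positivity)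
  exact mul_le_of_le_one_right (by positivity) h3

/-! ### Boundedness at regular points of a differential equation -/

/-- `θᵏ P (x) = ∑ p(n) nᵏ xⁿ`, where `P` is the generating function of the partition numbers and
`θ = x d/dx`; only meaningful for `‖x‖ < 1`. -/
noncomputable def thetaGF (k : ℕ) (x : ℂ) : ℂ := ∑' n : ℕ, (p n : ℂ) * (n : ℂ) ^ k * x ^ n

lemma summable_thetaGF (k : ℕ) {r : ℝ} (h0 : 0 ≤ r) (h1 : r < 1) :
    Summable fun n : ℕ => (p n : ℝ) * (n : ℝ) ^ k * r ^ n := by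
  -- comparison with the radius `s = √r > r`: `p(n) sⁿ` is bounded and `∑ nᵏ sⁿ` converges.
  set s := √r with hs
  have hs0 : 0 ≤ s := Real.sqrt_nonneg r
  have hs1 : s < 1 := by rw [hs, Real.sqrt_lt' one_pos]; simpa using h1
  have hss : s * s = r := Real.mul_self_sqrt h0
  have h2 := summable_pow_mul_geometric_of_norm_lt_one k (r := s)
    (by rwa [Real.norm_of_nonneg hs0])
  have h3 := summable_p hs0 hs1
  refine Summable.of_nonneg_of_le (fun n => by positivity) (fun n => ?_)
    (h2.mul_left (∑' n, (p n : ℝ) * s ^ n))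
  have h4 : (p n : ℝ) * s ^ n ≤ ∑' n, (p n : ℝ) * s ^ n :=
    h3.le_tsum n fun _ _ => by positivity
  calc (p n : ℝ) * (n : ℝ) ^ k * r ^ n = ((p n : ℝ) * s ^ n) * ((n : ℝ) ^ k * s ^ n) := by
        rw [← hss, mul_pow]; ring
    _ ≤ _ := mul_le_mul_of_nonneg_right h4 (by positivity)

lemma summable_thetaGF_complex (k : ℕ) {x : ℂ} (hx : ‖x‖ < 1) :
    Summable fun n : ℕ => (p n : ℂ) * (n : ℂ) ^ k * x ^ n := by
  refine Summable.of_norm ((summable_thetaGF k (norm_nonneg x) hx).congr fun n => ?_)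
  simp

/-- Along `x = ζ eᵗ` the operator `θ = x d/dx` becomes `d/dt`. -/
lemma hasDerivAt_thetaGF (k : ℕ) {ζ : ℂ} (hζ : ‖ζ‖ = 1) {t : ℝ} (ht : t < 0) :
    HasDerivAt (fun s : ℝ => thetaGF k (ζ * Real.exp s)) (thetaGF (k + 1) (ζ * Real.exp t)) t := by
  have hnorm : ∀ s : ℝ, ‖ζ * Real.exp s‖ = Real.exp s := by
    intro s
    rw [norm_mul, hζ, one_mul, Complex.norm_real, Real.norm_of_nonneg (Real.exp_pos s).le]
  have hlt : ∀ s : ℝ, s < 0 → ‖ζ * Real.exp s‖ < 1 := fun s hs => by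
    rw [hnorm]; exact Real.exp_lt_one_iff.2 hs
  have ht2 : t / 2 < 0 := by linarith
  have hterm : ∀ (n : ℕ) (s : ℝ), s ∈ Set.Iio (t / 2) →
      HasDerivAt (fun s : ℝ => (p n : ℂ) * (n : ℂ) ^ k * (ζ * (Real.exp s : ℂ)) ^ n)
        ((p n : ℂ) * (n : ℂ) ^ (k + 1) * (ζ * (Real.exp s : ℂ)) ^ n) s := by
    intro n s _
    have h1 : HasDerivAt (fun s : ℝ => (Real.exp s : ℂ)) (Real.exp s : ℂ) s :=
      (Real.hasDerivAt_exp s).ofReal_comp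
    have h2 := ((h1.const_mul ζ).pow n).const_mul ((p n : ℂ) * (n : ℂ) ^ k)
    refine h2.congr_deriv ?_
    rcases n with _ | n
    · simp
    · rw [Nat.add_sub_cancel, pow_succ (ζ * (Real.exp s : ℂ)) n, pow_succ _ k]
      ring
  have hdom : ∀ (n : ℕ) (s : ℝ), s ∈ Set.Iio (t / 2) →
      ‖(p n : ℂ) * (n : ℂ) ^ (k + 1) * (ζ * (Real.exp s : ℂ)) ^ n‖ ≤
        (p n : ℝ) * (n : ℝ) ^ (k + 1) * Real.exp (t / 2) ^ n := by
    intro n s hs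
    rw [norm_mul, norm_mul, norm_pow, norm_pow, hnorm, Complex.norm_natCast, Complex.norm_natCast]
    have : Real.exp s ≤ Real.exp (t / 2) := Real.exp_le_exp.2 (le_of_lt hs)
    gcongr
  have hmem : t ∈ Set.Iio (t / 2) := by
    simp only [Set.mem_Iio]
    linarith
  exact hasDerivAt_tsum_of_isPreconnected
    (summable_thetaGF (k + 1) (Real.exp_pos (t / 2)).le (Real.exp_lt_one_iff.2 ht2))
    isOpen_Iio isPreconnected_Iio hterm hdom hmem
    (summable_thetaGF_complex k (hlt t ht)) hmem

/-- If `∑_{k ≤ K} b_k θᵏ P` is bounded on the disc and the leading coefficient `b_K` does not vanish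
at the boundary point `ζ`, then `P` stays bounded along the radius ending at `ζ`. This is
Grönwall's inequality for the vector `(P, θP, …, θ^{K-1}P)`. -/
lemma bounded_of_ode {K : ℕ} {b : ℕ → Polynomial ℂ} {M : ℝ}
    (hM : ∀ x : ℂ, ‖x‖ < 1 → ‖∑ k ∈ range (K + 1), (b k).eval x * thetaGF k x‖ ≤ M)
    {ζ : ℂ} (hζ : ‖ζ‖ = 1) (hb : (b K).eval ζ ≠ 0) :
    ∃ C : ℝ, ∀ᶠ t : ℝ in 𝓝[<] 0, ‖thetaGF 0 (ζ * Real.exp t)‖ ≤ C := by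
  have hnorm : ∀ s : ℝ, ‖ζ * Real.exp s‖ = Real.exp s := by
    intro s
    rw [norm_mul, hζ, one_mul, Complex.norm_real, Real.norm_of_nonneg (Real.exp_pos s).le]
  have hlt : ∀ s : ℝ, s < 0 → ‖ζ * Real.exp s‖ < 1 := fun s hs => by
    rw [hnorm]; exact Real.exp_lt_one_iff.2 hs
  have hM0 : 0 ≤ M := (norm_nonneg _).trans (hM 0 (by simp))
  -- a common bound for the coefficients on the closed unit disc
  have hB : ∃ B : ℝ, 0 ≤ B ∧ ∀ k < K, ∀ x : ℂ, ‖x‖ < 1 → ‖(b k).eval x‖ ≤ B := by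
    have h : ∀ k, ∃ B : ℝ, 0 ≤ B ∧ ∀ x : ℂ, ‖x‖ < 1 → ‖(b k).eval x‖ ≤ B := by
      intro k
      obtain ⟨B, hB⟩ := (isCompact_closedBall (0 : ℂ) 1).exists_bound_of_continuousOn
        (b k).continuous.continuousOn
      refine ⟨B, (norm_nonneg _).trans (hB 0 (by simp)), fun x hx => hB x ?_⟩
      simpa using hx.le
    choose B hB0 hB using h
    refine ⟨∑ k ∈ range K, B k, sum_nonneg fun k _ => hB0 k, fun k hk x hx => ?_⟩
    exact (hB k x hx).trans (single_le_sum (fun i _ => hB0 i) (mem_range.2 hk))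
  obtain ⟨B, hB0, hB⟩ := hB
  set c := ‖(b K).eval ζ‖ / 2 with hc
  have hc0 : 0 < c := half_pos (norm_pos_iff.2 hb)
  have hcont : Continuous fun t : ℝ => ‖(b K).eval (ζ * (Real.exp t : ℂ))‖ := by
    have := (b K).continuous
    fun_prop
  have hev : ∀ᶠ t : ℝ in 𝓝 0, c < ‖(b K).eval (ζ * (Real.exp t : ℂ))‖ := by
    apply hcont.continuousAt.eventually_const_lt
    simp only [Real.exp_zero, Complex.ofReal_one, mul_one]
    exact half_lt_self (norm_pos_iff.2 hb)
  obtain ⟨δ, hδ0, hδ⟩ := Metric.eventually_nhds_iff.1 hev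
  set a := -(δ / 2) with ha
  have ha0 : a < 0 := by rw [ha]; linarith
  have hca : ∀ t, a ≤ t → t < 0 → c ≤ ‖(b K).eval (ζ * (Real.exp t : ℂ))‖ := by
    intro t h1 h2
    refine (hδ ?_).le
    rw [Real.dist_eq, sub_zero, abs_of_neg h2]
    linarith
  let Y : ℝ → (Fin K → ℂ) := fun t i => thetaGF i (ζ * Real.exp t)
  let Y' : ℝ → (Fin K → ℂ) := fun t i => thetaGF (i + 1) (ζ * Real.exp t)
  have hY : ∀ t < 0, HasDerivAt Y (Y' t) t := fun t ht =>
    hasDerivAt_pi.2 fun i => hasDerivAt_thetaGF i hζ ht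
  have hYle : ∀ t, ∀ k < K, ‖thetaGF k (ζ * Real.exp t)‖ ≤ ‖Y t‖ := fun t k hk =>
    norm_le_pi_norm (Y t) ⟨k, hk⟩
  -- solving the equation for its top-order term
  have htop : ∀ t, a ≤ t → t < 0 →
      ‖thetaGF K (ζ * Real.exp t)‖ ≤ c⁻¹ * (M + K * B * ‖Y t‖) := by
    intro t h1 h2
    have h3 := hM _ (hlt t h2)
    rw [sum_range_succ] at h3
    set x := ζ * (Real.exp t : ℂ) with hx
    have h4 : ‖∑ k ∈ range K, (b k).eval x * thetaGF k x‖ ≤ K * B * ‖Y t‖ := by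
      refine (norm_sum_le _ _).trans ?_
      have : ∀ k ∈ range K, ‖(b k).eval x * thetaGF k x‖ ≤ B * ‖Y t‖ := by
        intro k hk
        rw [norm_mul]
        exact mul_le_mul (hB k (mem_range.1 hk) x (hlt t h2)) (hYle t k (mem_range.1 hk))
          (norm_nonneg _) hB0
      simpa [mul_assoc] using sum_le_card_nsmul _ _ _ this
    have h5 : ‖(b K).eval x * thetaGF K x‖ ≤ M + K * B * ‖Y t‖ := by
      have := norm_le_add_norm_add' (∑ k ∈ range K, (b k).eval x * thetaGF k x)
        ((b K).eval x * thetaGF K x)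
      linarith
    rw [norm_mul] at h5
    rw [inv_mul_eq_div, le_div_iff₀ hc0, mul_comm]
    exact (mul_le_mul_of_nonneg_right (hca t h1 h2) (norm_nonneg _)).trans h5
  have hcK : 0 ≤ c⁻¹ * (K * B) := by positivity
  have hcM : 0 ≤ c⁻¹ * M := by positivity
  have hbound : ∀ t, a ≤ t → t < 0 → ‖Y' t‖ ≤ (1 + c⁻¹ * (K * B)) * ‖Y t‖ + c⁻¹ * M := by
    intro t h1 h2
    have hn := norm_nonneg (Y t)
    have h6 := mul_nonneg hcK hn
    refine (pi_norm_le_iff_of_nonneg (by positivity)).2 fun i => ?_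
    show ‖thetaGF (i + 1) (ζ * Real.exp t)‖ ≤ _
    rcases Nat.lt_or_ge (i + 1) K with hi | hi
    · have := hYle t _ hi
      nlinarith
    · have hiK : (i : ℕ) + 1 = K := by omega
      rw [hiK]
      have := htop t h1 h2
      nlinarith
  set G := gronwallBound ‖Y a‖ (1 + c⁻¹ * (K * B)) (c⁻¹ * M) (0 - a) with hG
  have hYG : ∀ t, a < t → t < 0 → ‖Y t‖ ≤ G := by
    intro t h1 h2
    have := norm_le_gronwallBound_of_norm_deriv_right_le (f := Y) (f' := Y') (a := a) (b := t)
      (fun s hs => (hY s (hs.2.trans_lt h2)).continuousAt.continuousWithinAt)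
      (fun s hs => (hY s (hs.2.trans h2)).hasDerivWithinAt) le_rfl
      (fun s hs => hbound s hs.1 (hs.2.trans h2)) t ⟨h1.le, le_rfl⟩
    exact this.trans (gronwallBound_mono (norm_nonneg _) hcM (by linarith) (by linarith))
  refine ⟨max G (c⁻¹ * (M + K * B * G)), ?_⟩
  filter_upwards [Ioo_mem_nhdsLT ha0] with t ht
  -- for `K = 0` the vector `Y` is empty, and the equation itself bounds `P`
  rcases Nat.eq_zero_or_pos K with hK | hK
  · refine le_max_of_le_right ?_
    have h7 := htop t ht.1.le ht.2
    have hK0 : (K : ℝ) = 0 := by exact_mod_cast hK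
    rw [hK0, zero_mul, zero_mul, add_zero] at h7 ⊢
    exact (congrArg (fun k => ‖thetaGF k (ζ * Real.exp t)‖) hK.symm).trans_le h7
  · exact le_max_of_le_left ((hYle t 0 hK).trans (hYG t ht.1 ht.2))

/-! ### From the recurrence to a differential equation -/

/-- A polynomial recurrence for `p(n)` gives a linear differential equation for its generating
function `P`: multiplying the recurrence by `x^{n+d}` and summing over `n` yields
`∑_j x^{d-j} c_j(θ - j) P = Q` with `Q` a polynomial, of which only boundedness on the disc is
recorded. -/
lemma exists_ode (h : PRecursive fun n => (p n : ℚ)) :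
    ∃ (K : ℕ) (b : ℕ → Polynomial ℂ) (M : ℝ), b K ≠ 0 ∧
      ∀ x : ℂ, ‖x‖ < 1 → ‖∑ k ∈ range (K + 1), (b k).eval x * thetaGF k x‖ ≤ M := by
  obtain ⟨d, c, hcd, hrec⟩ := h
  obtain ⟨n₀, hn₀⟩ := eventually_atTop.1 hrec
  -- `e j` is the polynomial `c_j(X - j)`, so that `e j (i + j) = c_j(i)`
  let e : ℕ → Polynomial ℂ := fun j =>
    ((c j).comp (Polynomial.X - Polynomial.C (j : ℚ))).map (algebraMap ℚ ℂ)
  have he : ∀ i j : ℕ, (e j).eval ((i + j : ℕ) : ℂ) = (((c j).eval (i : ℚ) : ℚ) : ℂ) := by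
    intro i j
    have h1 : (((i + j : ℕ) : ℚ) : ℂ) = ((i + j : ℕ) : ℂ) := by push_cast; rfl
    rw [← h1]
    have h2 : algebraMap ℚ ℂ ((i + j : ℕ) : ℚ) = (((i + j : ℕ) : ℚ) : ℂ) := rfl
    simp only [e]
    rw [← h2, Polynomial.eval_map_apply, Polynomial.eval_comp]
    simp
  have hed : e d ≠ 0 := by
    intro h0
    have h1 : ((c d).comp (Polynomial.X - Polynomial.C (d : ℚ))) = 0 :=
      (Polynomial.map_eq_zero _).1 h0
    apply hcd
    have h2 := congrArg (fun q => q.comp (Polynomial.X + Polynomial.C (d : ℚ))) h1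
    simpa [Polynomial.comp_assoc] using h2
  let b : ℕ → Polynomial ℂ := fun k =>
    ∑ j ∈ range (d + 1), Polynomial.C ((e j).coeff k) * Polynomial.X ^ (d - j)
  obtain ⟨N, hN⟩ : ∃ N, ∀ j ∈ range (d + 1), (e j).natDegree < N := by
    refine ⟨(range (d + 1)).sup (fun j => (e j).natDegree) + 1, fun j hj => ?_⟩
    exact Nat.lt_succ_of_le (le_sup (f := fun j => (e j).natDegree) hj)
  have hb0 : ∀ k, N ≤ k → b k = 0 := by
    intro k hk
    refine sum_eq_zero fun j hj => ?_
    rw [Polynomial.coeff_eq_zero_of_natDegree_lt ((hN j hj).trans_le hk)]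
    simp
  have hbne : b (e d).natDegree ≠ 0 := by
    intro h0
    have h1 := congrArg (fun q => q.coeff 0) h0
    -- only `j = d` contributes to the constant coefficient of `b k`, namely `(e d).coeff k`
    simp only [b, Polynomial.finsetSum_coeff, Polynomial.coeff_C_mul, Polynomial.coeff_X_pow,
      Polynomial.coeff_zero] at h1
    rw [sum_eq_single_of_mem d (by simp)] at h1
    · simp at h1
      exact hed h1
    · intro j hj hjd
      have : 0 ≠ d - j := by
        have := mem_range.1 hj
        omega
      simp [this]
  obtain ⟨K, hK, hKmax⟩ : ∃ K, b K ≠ 0 ∧ ∀ k, K < k → b k = 0 := by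
    classical
    have hex : ∃ n, ∀ k, n ≤ k → b k = 0 := ⟨N, hb0⟩
    have hpos : 0 < Nat.find hex := by
      rw [Nat.pos_iff_ne_zero]
      intro h0
      exact hbne (Nat.find_spec hex _ (by omega))
    refine ⟨Nat.find hex - 1, fun h0 => ?_, fun k hk => Nat.find_spec hex k (by omega)⟩
    refine Nat.find_min hex (m := Nat.find hex - 1) (by omega) fun k hk => ?_
    rcases Nat.eq_or_lt_of_le hk with rfl | hk
    · exact h0
    · exact Nat.find_spec hex k (by omega)
  have hKN : K + 1 ≤ N := by
    by_contra hlt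
    exact hK (hb0 K (by omega))
  refine ⟨K, b, ∑ j ∈ range (d + 1), ∑ n ∈ range (n₀ + j), ‖(e j).eval (n : ℂ) * (p n : ℂ)‖, hK,
    fun x hx => ?_⟩
  -- the series `∑ e_j(n) p(n) xⁿ`
  have hsum : ∀ j, Summable fun n : ℕ => (e j).eval (n : ℂ) * (p n : ℂ) * x ^ n := by
    intro j
    have : ∀ n : ℕ, (e j).eval (n : ℂ) * (p n : ℂ) * x ^ n =
        ∑ k ∈ range ((e j).natDegree + 1),
          (e j).coeff k * ((p n : ℂ) * (n : ℂ) ^ k * x ^ n) := by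
      intro n
      rw [Polynomial.eval_eq_sum_range, sum_mul, sum_mul]
      exact sum_congr rfl fun k _ => by ring
    simp only [this]
    exact summable_sum fun k _ => (summable_thetaGF_complex k hx).mul_left _
  have htsum : ∀ j ∈ range (d + 1), ∑' n : ℕ, (e j).eval (n : ℂ) * (p n : ℂ) * x ^ n =
      ∑ k ∈ range N, (e j).coeff k * thetaGF k x := by
    intro j hj
    have : ∀ n : ℕ, (e j).eval (n : ℂ) * (p n : ℂ) * x ^ n =
        ∑ k ∈ range N, (e j).coeff k * ((p n : ℂ) * (n : ℂ) ^ k * x ^ n) := by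
      intro n
      rw [Polynomial.eval_eq_sum_range' (hN j hj), sum_mul, sum_mul]
      exact sum_congr rfl fun k _ => by ring
    simp only [this]
    rw [Summable.tsum_finsetSum fun k _ => (summable_thetaGF_complex k hx).mul_left _]
    exact sum_congr rfl fun k _ => tsum_mul_left
  have h1 : ∑ k ∈ range (K + 1), (b k).eval x * thetaGF k x =
      ∑ j ∈ range (d + 1), x ^ (d - j) * ∑' n : ℕ, (e j).eval (n : ℂ) * (p n : ℂ) * x ^ n := by
    have h2 : ∑ k ∈ range (K + 1), (b k).eval x * thetaGF k x =
        ∑ k ∈ range N, (b k).eval x * thetaGF k x := by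
      refine sum_subset (range_subset_range.2 hKN) fun k _ hk => ?_
      rw [hKmax k (by simp only [mem_range] at hk; omega)]
      simp
    rw [h2]
    trans ∑ j ∈ range (d + 1), x ^ (d - j) * ∑ k ∈ range N, (e j).coeff k * thetaGF k x
    swap
    · exact sum_congr rfl fun j hj => by rw [htsum j hj]
    simp only [b, Polynomial.eval_finsetSum, Polynomial.eval_mul, Polynomial.eval_C,
      Polynomial.eval_pow, Polynomial.eval_X, sum_mul, mul_sum]
    rw [sum_comm]
    exact sum_congr rfl fun j _ => sum_congr rfl fun k _ => by ring
  have hs2 : ∀ j, Summable fun i : ℕ =>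
      (e j).eval ((i + (n₀ + j) : ℕ) : ℂ) * (p (i + (n₀ + j)) : ℂ) * x ^ (i + (n₀ + j)) := fun j =>
    (summable_nat_add_iff (n₀ + j)).2 (hsum j)
  -- the tails, aligned by the shifts, cancel by the recurrence
  have htail : ∑ j ∈ range (d + 1), x ^ (d - j) * ∑' i : ℕ,
      (e j).eval ((i + (n₀ + j) : ℕ) : ℂ) * (p (i + (n₀ + j)) : ℂ) * x ^ (i + (n₀ + j)) = 0 := by
    simp only [← tsum_mul_left]
    rw [← Summable.tsum_finsetSum fun j _ => (hs2 j).mul_left _]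
    refine (tsum_congr fun i => ?_).trans tsum_zero
    have hr := hn₀ (i + n₀) (by omega)
    have hr' : ∑ j ∈ range (d + 1), (((c j).eval ((i + n₀ : ℕ) : ℚ) : ℚ) : ℂ) *
        (p (i + n₀ + j) : ℂ) = 0 := by
      exact_mod_cast congrArg (fun q : ℚ => (q : ℂ)) hr
    have h3 : ∀ j ∈ range (d + 1), x ^ (d - j) *
        ((e j).eval ((i + (n₀ + j) : ℕ) : ℂ) * (p (i + (n₀ + j)) : ℂ) * x ^ (i + (n₀ + j))) =
        ((((c j).eval ((i + n₀ : ℕ) : ℚ) : ℚ) : ℂ) * (p (i + n₀ + j) : ℂ)) * x ^ (i + n₀ + d) := by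
      intro j hj
      have hjd : i + n₀ + d = (d - j) + (i + (n₀ + j)) := by
        have := mem_range.1 hj
        omega
      rw [← add_assoc i n₀ j, he, hjd, pow_add, ← add_assoc i n₀ j]
      ring
    rw [sum_congr rfl h3, ← sum_mul, hr', zero_mul]
  have hsplit : ∀ j, ∑' n : ℕ, (e j).eval (n : ℂ) * (p n : ℂ) * x ^ n =
      ∑ n ∈ range (n₀ + j), (e j).eval (n : ℂ) * (p n : ℂ) * x ^ n + ∑' i : ℕ,
      (e j).eval ((i + (n₀ + j) : ℕ) : ℂ) * (p (i + (n₀ + j)) : ℂ) * x ^ (i + (n₀ + j)) := fun j =>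
    ((hsum j).sum_add_tsum_nat_add (n₀ + j)).symm
  rw [h1]
  simp only [hsplit, mul_add, sum_add_distrib]
  rw [htail, add_zero]
  refine (norm_sum_le _ _).trans (sum_le_sum fun j _ => ?_)
  have hxp : ∀ n, ‖x ^ n‖ ≤ 1 := fun n => by
    rw [norm_pow]; exact pow_le_one₀ (norm_nonneg x) hx.le
  rw [norm_mul]
  refine (mul_le_of_le_one_left (norm_nonneg _) (hxp _)).trans ?_
  refine (norm_sum_le _ _).trans (sum_le_sum fun n _ => ?_)
  rw [norm_mul _ (x ^ n)]
  exact mul_le_of_le_one_right (norm_nonneg _) (hxp n)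

/-! ### The contradiction at a root of unity -/

/-- The generating function is at least of order `1 / (1 - r^m)` at `rζ`. -/
lemma one_le_norm_thetaGF_mul {ζ : ℂ} {m : ℕ} (hm : 0 < m) (hζ : IsPrimitiveRoot ζ m) {r : ℝ}
    (h0 : 0 < r) (h1 : r < 1) :
    1 ≤ ‖thetaGF 0 (ζ * r)‖ * (2 ^ m * (1 - r ^ m) * Real.exp (m * 2 ^ m)) := by
  have hn : ‖ζ‖ = 1 := hζ.norm'_eq_one hm.ne'
  have hx : ‖(r : ℂ) * ζ‖ < 1 := by
    rw [norm_mul, hn, mul_one, Complex.norm_real, Real.norm_of_nonneg h0.le]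
    exact h1
  have hlim := (tendsto_inv_prod hx).norm
  have hsub : Tendsto (fun M : ℕ => m * (M + 1)) atTop atTop :=
    tendsto_atTop_mono (fun M => (Nat.le_succ M).trans (Nat.le_mul_of_pos_left _ hm)) tendsto_id
  have hF : thetaGF 0 (ζ * r) = ∑' n, (p n : ℂ) * ((r : ℂ) * ζ) ^ n := by
    simp [thetaGF, mul_comm]
  rw [hF]
  refine ge_of_tendsto' ((hlim.comp hsub).mul_const _) fun M => ?_
  have hne : ∏ i ∈ range (m * (M + 1)), (1 - ((r : ℂ) * ζ) ^ (i + 1)) ≠ 0 := by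
    refine prod_ne_zero_iff.2 fun i _ hi => ?_
    have h2 : ‖((r : ℂ) * ζ) ^ (i + 1)‖ < 1 := by
      rw [norm_pow]; exact pow_lt_one₀ (norm_nonneg _) hx (by omega)
    rw [← sub_eq_zero.1 hi, norm_one] at h2
    exact lt_irrefl _ h2
  simp only [Function.comp_apply, norm_inv]
  rw [inv_mul_eq_div, one_le_div (norm_pos_iff.2 hne)]
  exact norm_prod_le hm hζ h0 h1 M

lemma exists_primitiveRoot_eval_ne_zero {q : Polynomial ℂ} (hq : q ≠ 0) :
    ∃ (m : ℕ) (ζ : ℂ), 0 < m ∧ IsPrimitiveRoot ζ m ∧ q.eval ζ ≠ 0 := by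
  let f : ℕ → ℂ := fun m => Complex.exp (2 * Real.pi * Complex.I / (m + 1 : ℕ))
  have hf : ∀ m, IsPrimitiveRoot (f m) (m + 1) := fun m =>
    Complex.isPrimitiveRoot_exp (m + 1) (Nat.succ_ne_zero m)
  have hinj : Function.Injective f := fun a b hab => by
    have h1 := (hf a).eq_orderOf
    have h2 := (hf b).eq_orderOf
    rw [hab] at h1
    omega
  by_contra hcon
  push Not at hcon
  exact hq (Polynomial.eq_zero_of_infinite_isRoot q ((Set.infinite_range_of_injective hinj).mono
    (by rintro _ ⟨m, rfl⟩; exact hcon (m + 1) (f m) (Nat.succ_pos m) (hf m))))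

end PartitionHolonomic

/-- The partition-counting sequence `n ↦ p(n)` is not P-recursive. -/
theorem partitions_not_pRecursive :
    ¬ PRecursive (fun n => (Fintype.card (Nat.Partition n) : ℚ)) := by
  intro h
  obtain ⟨K, b, M, hK, hM⟩ := PartitionHolonomic.exists_ode h
  obtain ⟨m, ζ, hm, hζ, hne⟩ := PartitionHolonomic.exists_primitiveRoot_eval_ne_zero hK
  obtain ⟨C, hC⟩ := PartitionHolonomic.bounded_of_ode hM (hζ.norm'_eq_one hm.ne') hne
  have hlim : Filter.Tendsto (fun t : ℝ => C * (2 ^ m * (1 - Real.exp t ^ m) * Real.exp (m * 2 ^ m)))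
      (nhdsWithin (0 : ℝ) (Set.Iio 0)) (nhds 0) := by
    have hc : Continuous fun t : ℝ =>
        C * (2 ^ m * (1 - Real.exp t ^ m) * Real.exp (m * 2 ^ m)) := by fun_prop
    have := hc.tendsto 0
    simp only [Real.exp_zero, one_pow, sub_self, mul_zero, zero_mul] at this
    exact this.mono_left nhdsWithin_le_nhds
  have hle : ∀ᶠ t : ℝ in nhdsWithin 0 (Set.Iio 0),
      1 ≤ C * (2 ^ m * (1 - Real.exp t ^ m) * Real.exp (m * 2 ^ m)) := by
    filter_upwards [hC, self_mem_nhdsWithin] with t ht ht0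
    have h1 := Real.exp_lt_one_iff.2 ht0
    refine (PartitionHolonomic.one_le_norm_thetaGF_mul hm hζ (Real.exp_pos t) h1).trans ?_
    have : 0 ≤ 1 - Real.exp t ^ m := by
      linarith [pow_le_one₀ (n := m) (Real.exp_pos t).le h1.le]
    gcongr
  exact absurd (ge_of_tendsto hlim hle) (by norm_num)
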